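/- Fix n ≥ 1 and m ≥ 1. The map sending a subset S of the index set {1, ..., m} × {0, ..., n−1} to the closed linear span of {e_i z^{nk+j} : (i,j) ∈ S, k ∈ ℕ} is injective, and each such subspace is a reducing subspace for T_{z^n}. Consequently, T_{z^n} on H²_{ℂᵐ}(𝔻) has at least 2^{mn} distinct reducing subspaces. -/

import Mathlib

noncomputable section

/-- The vector-valued Hardy space `H²_{ℂᵐ}(𝔻)`. -/
abbrev HardyVec (m : ℕ) : Type :=
  lp (fun _ : ℕ => EuclideanSpace ℂ (Fin m)) 2

/-- The element `e_i z^p` of `H²_{ℂᵐ}(𝔻)`. -/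
def eiz (m : ℕ) (i : Fin m) (p : ℕ) : HardyVec m :=
  lp.single 2 p (EuclideanSpace.single i (1 : ℂ))

/-- The closed linear span of `{e_i z^{nk+j} : (i,j) ∈ S, k ∈ ℕ}`, for a subset `S` of the
index set `{1,…,m} × {0,…,n-1}`. -/
def spanOf (m n : ℕ) (S : Set (Fin m × Fin n)) : Submodule ℂ (HardyVec m) :=
  (Submodule.span ℂ
    {x : HardyVec m | ∃ ij ∈ S, ∃ k : ℕ, x = eiz m ij.1 (n * k + ij.2)}).topologicalClosure

/-!
A closed span is invariant under `T` and under `T†` as soon as its generators are sent back into it,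
and invariance under `T†` is invariance of the orthogonal complement under `T`. On the orthonormal
family `e_i z^p`, both `T_{z^n}` and its adjoint act by shifting `p` by `n` (or give `0`), so every
set of pairs `(i, p)` that is `n`-periodic in `p` spans a reducing subspace. Orthonormality recovers
the index set from the closed span, and the `n`-periodic sets correspond to the sets of pairs
`(i, p mod n)`.
-/

open Submodule ContinuousLinearMap Module.End
open scoped InnerProductSpace ENNReal

theorem topologicalClosure_span_mem_invtSubmodule {R M : Type*} [CommSemiring R]
    [TopologicalSpace M] [AddCommMonoid M] [Module R M] [ContinuousAdd M] [ContinuousConstSMul R M]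
    {T : M →L[R] M} {s : Set M} (hs : ∀ u ∈ s, T u ∈ (span R s).topologicalClosure) :
    (span R s).topologicalClosure ∈ invtSubmodule T.toLinearMap :=
  topologicalClosure_minimal _ (span_le.2 hs)
    ((isClosed_topologicalClosure _).preimage T.continuous)

section ClosedSpan

variable {𝕜 E ι : Type*} [RCLike 𝕜] [NormedAddCommGroup E] [InnerProductSpace 𝕜 E]

theorem mem_topologicalClosure_span_image_iff {v : ι → E} (hv : Orthonormal 𝕜 v) {A : Set ι}
    {i : ι} : v i ∈ (span 𝕜 (v '' A)).topologicalClosure ↔ i ∈ A := by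
  refine ⟨fun hi => ?_, fun hi =>
    le_topologicalClosure _ (subset_span (Set.mem_image_of_mem v hi))⟩
  by_contra hiA
  have span_le_orthogonal : span 𝕜 (v '' A) ≤ (𝕜 ∙ v i)ᗮ := by
    rw [span_le]
    rintro _ ⟨j, hj, rfl⟩
    exact mem_orthogonal_singleton_iff_inner_right.2
      (hv.inner_eq_zero (ne_of_mem_of_not_mem hj hiA).symm)
  have inner_self : ⟪v i, v i⟫_𝕜 = 0 :=
    mem_orthogonal_singleton_iff_inner_right.1
      (topologicalClosure_minimal _ span_le_orthogonal (isClosed_orthogonal _) hi)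
  exact hv.ne_zero i (inner_self_eq_zero.1 inner_self)

theorem topologicalClosure_span_image_injective {v : ι → E} (hv : Orthonormal 𝕜 v) :
    Function.Injective fun A : Set ι => (span 𝕜 (v '' A)).topologicalClosure := by
  intro A B hAB
  ext i
  rw [← mem_topologicalClosure_span_image_iff hv, ← mem_topologicalClosure_span_image_iff hv]
  exact SetLike.ext_iff.1 hAB (v i)

/-- `M` is a reducing subspace for `T`: both `M` and `Mᗮ` are invariant under `T`. Closedness of `M`
is not part of the definition. -/
def IsReducing (T : E →L[𝕜] E) (M : Submodule 𝕜 E) : Prop :=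
  (∀ x ∈ M, T x ∈ M) ∧ ∀ x ∈ Mᗮ, T x ∈ Mᗮ

theorem isReducing_topologicalClosure_span [CompleteSpace E] {T : E →L[𝕜] E} {s : Set E}
    (hT : ∀ u ∈ s, T u ∈ (span 𝕜 s).topologicalClosure)
    (hT_adjoint : ∀ u ∈ s, T.adjoint u ∈ (span 𝕜 s).topologicalClosure) :
    IsReducing T (span 𝕜 s).topologicalClosure :=
  ⟨topologicalClosure_span_mem_invtSubmodule hT,
    orthogonal_mem_invtSubmodule (topologicalClosure_span_mem_invtSubmodule hT_adjoint)⟩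

end ClosedSpan

/-- `T` is the forward shift by `n` places on `E`-valued `ℓᵖ` sequences; for `p = 2` this is the
Toeplitz operator `T_{z^n}`. -/
def IsForwardShift {E : Type*} [NormedAddCommGroup E] {p : ℝ≥0∞} (n : ℕ)
    (T : lp (fun _ : ℕ => E) p → lp (fun _ : ℕ => E) p) : Prop :=
  ∀ F k, T F k = if k < n then 0 else F (k - n)

namespace IsForwardShift

section Lp

variable {E : Type*} [NormedAddCommGroup E] {p : ℝ≥0∞} {n : ℕ}
  {T : lp (fun _ : ℕ => E) p → lp (fun _ : ℕ => E) p}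

theorem apply_of_lt (hT : IsForwardShift n T) (F : lp (fun _ : ℕ => E) p) {k : ℕ} (hk : k < n) :
    T F k = 0 := by
  rw [hT, if_pos hk]

theorem apply_add (hT : IsForwardShift n T) (F : lp (fun _ : ℕ => E) p) (k : ℕ) :
    T F (k + n) = F k := by
  rw [hT, if_neg (by lia), Nat.add_sub_cancel]

theorem map_single (hT : IsForwardShift n T) (q : ℕ) (a : E) :
    T (lp.single p q a) = lp.single p (q + n) a := by
  ext k
  rcases lt_or_ge k n with hk | hk
  · rw [hT.apply_of_lt _ hk, lp.single_apply_ne _ _ _ (by lia)]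
  · obtain ⟨l, rfl⟩ := Nat.exists_eq_add_of_le' hk
    simp only [hT.apply_add, lp.single_apply, Pi.single_apply, Nat.add_right_cancel_iff]

end Lp

section Adjoint

variable {𝕜 E : Type*} [RCLike 𝕜] [NormedAddCommGroup E] [InnerProductSpace 𝕜 E] [CompleteSpace E]
  {n : ℕ} {T : lp (fun _ : ℕ => E) 2 →L[𝕜] lp (fun _ : ℕ => E) 2}

theorem adjoint_single_of_lt (hT : IsForwardShift n T) {q : ℕ} (hq : q < n) (a : E) :
    T.adjoint (lp.single 2 q a) = 0 := by
  refine ext_inner_right 𝕜 fun F => ?_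
  rw [adjoint_inner_left, lp.inner_single_left, hT.apply_of_lt F hq, inner_zero_right,
    inner_zero_left]

theorem adjoint_single_add (hT : IsForwardShift n T) (q : ℕ) (a : E) :
    T.adjoint (lp.single 2 (q + n) a) = lp.single 2 q a := by
  refine ext_inner_right 𝕜 fun F => ?_
  rw [adjoint_inner_left, lp.inner_single_left, hT.apply_add, lp.inner_single_left]

end Adjoint

end IsForwardShift

theorem orthonormal_eiz (m : ℕ) : Orthonormal ℂ (Function.uncurry (eiz m)) := by
  rw [orthonormal_iff_ite]
  rintro ⟨i, p⟩ ⟨j, q⟩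
  simp only [Function.uncurry_apply_pair, eiz, lp.inner_single_left, lp.single_apply,
    EuclideanSpace.inner_single_left, map_one, one_mul, Prod.mk.injEq]
  by_cases hpq : p = q
  · subst hpq
    simp
  · simp [hpq]

theorem IsForwardShift.isReducing_topologicalClosure_span_eiz {m n : ℕ}
    {T : HardyVec m →L[ℂ] HardyVec m} (hT : IsForwardShift n T) {A : Set (Fin m × ℕ)}
    (hA : ∀ i p, (i, p + n) ∈ A ↔ (i, p) ∈ A) :
    IsReducing T (span ℂ (Function.uncurry (eiz m) '' A)).topologicalClosure := by
  have eiz_mem {i p} (h : (i, p) ∈ A) :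
      eiz m i p ∈ (span ℂ (Function.uncurry (eiz m) '' A)).topologicalClosure :=
    (mem_topologicalClosure_span_image_iff (orthonormal_eiz m)).2 h
  refine isReducing_topologicalClosure_span ?_ ?_ <;> rintro _ ⟨⟨i, p⟩, hip, rfl⟩
  · have map_eiz : T (eiz m i p) = eiz m i (p + n) := hT.map_single p _
    exact map_eiz ▸ eiz_mem ((hA i p).2 hip)
  · rcases lt_or_ge p n with hp | hp
    · have adjoint_eiz : T.adjoint (eiz m i p) = 0 := hT.adjoint_single_of_lt hp _
      exact adjoint_eiz ▸ zero_mem _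
    · obtain ⟨q, rfl⟩ := Nat.exists_eq_add_of_le' hp
      have adjoint_eiz : T.adjoint (eiz m i (q + n)) = eiz m i q := hT.adjoint_single_add q _
      exact adjoint_eiz ▸ eiz_mem ((hA i q).1 hip)

/-- The set of pairs `(a, p)` for which `(a, p mod n)` lies in `S`, that is, the extension of `S` to
a subset of `α × ℕ` that is `n`-periodic in the second coordinate. It is empty for `n = 0`. -/
def periodicExtension {α : Type*} {n : ℕ} (S : Set (α × Fin n)) : Set (α × ℕ) :=
  {x | ∃ j : Fin n, (x.1, j) ∈ S ∧ x.2 % n = j}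

section PeriodicExtension

variable {α : Type*} {n : ℕ}

theorem mk_add_mem_periodicExtension {S : Set (α × Fin n)} (a : α) (p : ℕ) :
    (a, p + n) ∈ periodicExtension S ↔ (a, p) ∈ periodicExtension S := by
  simp only [periodicExtension, Set.mem_ofPred_eq, Nat.add_mod_right]

theorem mk_val_mem_periodicExtension {S : Set (α × Fin n)} {a : α} {j : Fin n} :
    (a, (j : ℕ)) ∈ periodicExtension S ↔ (a, j) ∈ S := by
  simp [periodicExtension, Nat.mod_eq_of_lt, Fin.val_inj]

theorem periodicExtension_injective :
    Function.Injective (periodicExtension : Set (α × Fin n) → Set (α × ℕ)) := by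
  intro S S' h
  ext ⟨a, j⟩
  rw [← mk_val_mem_periodicExtension, h, mk_val_mem_periodicExtension]

end PeriodicExtension

theorem spanOf_eq_topologicalClosure_span_image (m n : ℕ) (S : Set (Fin m × Fin n)) :
    spanOf m n S =
      (span ℂ (Function.uncurry (eiz m) '' periodicExtension S)).topologicalClosure := by
  unfold spanOf
  congr 2
  ext x
  constructor
  · rintro ⟨⟨i, j⟩, hij, k, rfl⟩
    exact ⟨(i, n * k + j), ⟨j, hij, by rw [Nat.mul_add_mod, Nat.mod_eq_of_lt j.isLt]⟩, rfl⟩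
  · rintro ⟨⟨i, p⟩, ⟨j, hij, hp⟩, rfl⟩
    exact ⟨(i, j), hij, p / n, by rw [← hp, Nat.div_add_mod]; rfl⟩

theorem spanOf_injective (m n : ℕ) : Function.Injective (spanOf m n) := by
  rw [funext (spanOf_eq_topologicalClosure_span_image m n)]
  exact (topologicalClosure_span_image_injective (orthonormal_eiz m)).comp
    periodicExtension_injective

theorem IsForwardShift.isReducing_spanOf {m n : ℕ} {T : HardyVec m →L[ℂ] HardyVec m}
    (hT : IsForwardShift n T) (S : Set (Fin m × Fin n)) : IsReducing T (spanOf m n S) := by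
  rw [spanOf_eq_topologicalClosure_span_image]
  exact hT.isReducing_topologicalClosure_span_eiz mk_add_mem_periodicExtension

/-- The map `S ↦ closed span of {e_i z^{nk+j} : (i,j) ∈ S, k ∈ ℕ}` is injective on subsets of
`{1,…,m} × {0,…,n-1}`, and each such subspace reduces `T_{z^n}`; consequently `T_{z^n}` has at
least `2^{mn}` distinct reducing subspaces. -/
theorem at_least_two_pow_mn_reducing_subspaces (m n : ℕ) (hm : 1 ≤ m) (hn : 1 ≤ n)
    (T : HardyVec m →L[ℂ] HardyVec m)
    (hT : ∀ (F : HardyVec m) (k : ℕ), T F k = if k < n then 0 else F (k - n)) :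
    Function.Injective (spanOf m n) ∧
    (∀ S : Set (Fin m × Fin n),
      (∀ x ∈ spanOf m n S, T x ∈ spanOf m n S) ∧
      (∀ x ∈ (spanOf m n S)ᗮ, T x ∈ (spanOf m n S)ᗮ)) ∧
    (∃ F : Finset (Submodule ℂ (HardyVec m)), F.card = 2 ^ (m * n) ∧
      ∀ M ∈ F, IsClosed (M : Set (HardyVec m)) ∧
        (∀ x ∈ M, T x ∈ M) ∧ (∀ x ∈ Mᗮ, T x ∈ Mᗮ)) := by
  classical
  have reducing (S : Set (Fin m × Fin n)) : IsReducing T (spanOf m n S) :=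
    IsForwardShift.isReducing_spanOf hT S
  refine ⟨spanOf_injective m n, reducing,
    Finset.univ.map ⟨spanOf m n, spanOf_injective m n⟩, ?_, ?_⟩
  · simp only [Finset.card_map, Finset.card_univ, Fintype.card_set, Fintype.card_prod,
      Fintype.card_fin]
  · intro M hM
    obtain ⟨S, -, rfl⟩ := Finset.mem_map.1 hM
    exact ⟨isClosed_topologicalClosure _, reducing S⟩
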